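/- arXiv:cs/0207060 — 6 statements merged into one kernel-verified Lean document; each statement's English description precedes it below -/
import Mathlib

section
/- For any extended logic program Π, the operator A_Π = C_Π∘C_Π is monotonic: for all sets of literals X₁, X₂, if X₁ ⊆ X₂ then A_Π(X₁) ⊆ A_Π(X₂); consequently A_Π possesses a least fixpoint and a greatest fixpoint. -/
open scoped Classical

/-- A literal: an atom `A` or its classical negation `¬A`. -/
inductive Lit (α : Type) : Type
  | pos : α → Lit α
  | neg : α → Lit α

/-- A rule with a head literal and finite positive and negative bodies. -/
structure Rule (α : Type) where
  head : Lit α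
  pbody : Finset (Lit α)
  nbody : Finset (Lit α)

/-- A program is a set of rules (finiteness is stated as a hypothesis). -/
abbrev Program (α : Type) := Set (Rule α)

/-- `X` is consistent if it contains no complementary pair. -/
def Consistent {α : Type} (X : Set (Lit α)) : Prop :=
  ¬ ∃ A : α, Lit.pos A ∈ X ∧ Lit.neg A ∈ X

/-- `X` is logically closed if it is consistent or equals the set of all literals. -/
def LogClosed {α : Type} (X : Set (Lit α)) : Prop :=
  Consistent X ∨ X = Set.univ

/-- `X` is closed under (basic) program `P`. -/
def ClosedUnder {α : Type} (P : Program α) (X : Set (Lit α)) : Prop :=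
  ∀ r ∈ P, ↑r.pbody ⊆ X → r.head ∈ X

/-- `Cn P` : the smallest logically closed set closed under basic program `P`. -/
def Cn {α : Type} (P : Program α) : Set (Lit α) :=
  ⋂₀ {X | LogClosed X ∧ ClosedUnder P X}

/-- The reduct of `P` relative to `X`. -/
def reduct {α : Type} (P : Program α) (X : Set (Lit α)) : Program α :=
  {s | ∃ r ∈ P, (↑r.nbody ∩ X = (∅ : Set (Lit α))) ∧ s = ⟨r.head, r.pbody, ∅⟩}

/-- A program is basic if all its rules have empty negative body. -/
def IsBasic {α : Type} (P : Program α) : Prop := ∀ r ∈ P, r.nbody = ∅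

/-- `C_Π(X) = Cn(Π^X)`. -/
noncomputable def Cop {α : Type} (P : Program α) (X : Set (Lit α)) : Set (Lit α) :=
  Cn (reduct P X)

/-- `A_Π(X) = C_Π(C_Π(X))`. -/
noncomputable def Aop {α : Type} (P : Program α) (X : Set (Lit α)) : Set (Lit α) :=
  Cop P (Cop P X)

/-- `X` is an answer set of `P` iff `Cn(P^X) = X`. -/
def AnswerSet {α : Type} (P : Program α) (X : Set (Lit α)) : Prop :=
  Cn (reduct P X) = X

/-- Immediate consequence operator for a basic program. -/
noncomputable def T {α : Type} (P : Program α) (X : Set (Lit α)) : Set (Lit α) :=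
  if Consistent X then {L | ∃ r ∈ P, ↑r.pbody ⊆ X ∧ L = r.head} else Set.univ

/-- `r` is active wrt `(X, Y)`. -/
def Active {α : Type} (r : Rule α) (X Y : Set (Lit α)) : Prop :=
  ↑r.pbody ⊆ X ∧ ↑r.nbody ∩ Y = (∅ : Set (Lit α))

/-- Extended immediate consequence operator `T_{Π,Y}(X)`. -/
noncomputable def TE {α : Type} (P : Program α) (Y X : Set (Lit α)) : Set (Lit α) :=
  if Consistent X then {L | ∃ r ∈ P, Active r X Y ∧ L = r.head} else Set.univ

/-- Preference-sensitive operator `T_{(Π,<),Y}(X)` (Definition 1). -/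
noncomputable def TP {α : Type} (P : Program α) (lt : Rule α → Rule α → Prop)
    (Y X : Set (Lit α)) : Set (Lit α) :=
  if Consistent X then
    {L | ∃ r ∈ P, Active r X Y ∧
      (¬ ∃ r' ∈ P, lt r r' ∧ Active r' Y X ∧ r'.head ∉ X) ∧ L = r.head}
  else Set.univ

/-- `C_{(Π,<)}(X)` (Definition 2). -/
noncomputable def CP {α : Type} (P : Program α) (lt : Rule α → Rule α → Prop)
    (X : Set (Lit α)) : Set (Lit α) :=
  ⋃ i : ℕ, (TP P lt X)^[i] ∅

/-- `A_{(Π,<)}(X) = C_{(Π,<)}(C_{(Π,<)}(X))`. -/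
noncomputable def AP {α : Type} (P : Program α) (lt : Rule α → Rule α → Prop)
    (X : Set (Lit α)) : Set (Lit α) :=
  CP P lt (CP P lt X)

/-- The set `D^r_{(X,Y)}` of removable literals. -/
def D {α : Type} (P : Program α) (lt : Rule α → Rule α → Prop) (r : Rule α)
    (X Y : Set (Lit α)) : Set (Lit α) :=
  {L | ∀ r' ∈ P, r'.head = L → ↑r'.pbody ⊆ Y →
      lt r' r ∧ ({r.head} ∪ X) ∩ ↑r'.nbody ≠ (∅ : Set (Lit α))}

/-- `T°_{(Π,<),Y}(X)` (Definition 3). -/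
noncomputable def TN {α : Type} (P : Program α) (lt : Rule α → Rule α → Prop)
    (Y X : Set (Lit α)) : Set (Lit α) :=
  if Consistent X then
    {L | ∃ r ∈ P, Active r X (Y \ D P lt r X Y) ∧ L = r.head}
  else Set.univ

/-- `C°_{(Π,<)}(X)` (Definition 4). -/
noncomputable def CN {α : Type} (P : Program α) (lt : Rule α → Rule α → Prop)
    (X : Set (Lit α)) : Set (Lit α) :=
  ⋃ i : ℕ, (TN P lt X)^[i] ∅

/-- `A°_{(Π,<)}(X) = C°_{(Π,<)}(C_Π(X))`. -/
noncomputable def AN {α : Type} (P : Program α) (lt : Rule α → Rule α → Prop)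
    (X : Set (Lit α)) : Set (Lit α) :=
  CN P lt (Cop P X)

theorem Cop_anti_aux {α : Type} (P : Program α) {X Y : Set (Lit α)} (h : X ⊆ Y) :
    Cop P Y ⊆ Cop P X := by
  unfold Cop Cn
  apply Set.sInter_subset_sInter
  rintro Z ⟨hZ, hc⟩
  refine ⟨hZ, ?_⟩
  rintro s ⟨r, hr, hn, rfl⟩
  refine hc _ ⟨r, hr, ?_, rfl⟩
  exact Set.subset_empty_iff.mp (hn ▸ Set.inter_subset_inter_right _ h)

/-- `A_Π = C_Π ∘ C_Π` is monotonic, hence has a least and a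
greatest fixpoint. -/
theorem Aop_monotone_lfp_gfp {α : Type} (P : Program α) (hfin : P.Finite) :
    (∀ X₁ X₂ : Set (Lit α), X₁ ⊆ X₂ → Aop P X₁ ⊆ Aop P X₂) ∧
    (∃ L : Set (Lit α), Aop P L = L ∧ ∀ Z, Aop P Z = Z → L ⊆ Z) ∧
    (∃ G : Set (Lit α), Aop P G = G ∧ ∀ Z, Aop P Z = Z → Z ⊆ G) := by
  have hm : ∀ X₁ X₂ : Set (Lit α), X₁ ⊆ X₂ → Aop P X₁ ⊆ Aop P X₂ :=
    fun _ _ h => Cop_anti_aux P (Cop_anti_aux P h)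
  let f : Set (Lit α) →o Set (Lit α) := ⟨Aop P, fun _ _ h => hm _ _ h⟩
  exact ⟨hm, ⟨f.lfp, f.map_lfp, fun Z hZ => f.lfp_le (le_of_eq hZ)⟩,
    ⟨f.gfp, f.map_gfp, fun Z hZ => f.le_gfp (ge_of_eq hZ)⟩⟩
end

section
/- For any extended logic program Π and any answer set X of Π, it holds that X = ∪_{i≥0} T^i_{Π^X}(∅), where Π^X is the reduct of Π relative to X. -/
open scoped Classical

theorem T_mono_aux {α : Type} (Q : Program α) : Monotone (T Q) := by
  intro X Y h
  unfold T
  by_cases hY : Consistent Y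
  · have hX : Consistent X := fun ⟨A, h1, h2⟩ => hY ⟨A, h h1, h h2⟩
    rw [if_pos hX, if_pos hY]
    rintro L ⟨r, hr, hb, hL⟩
    exact ⟨r, hr, hb.trans h, hL⟩
  · rw [if_neg hY]
    exact Set.subset_univ _

theorem T_iter_mono_aux {α : Type} (Q : Program α) :
    Monotone (fun i : ℕ => (T Q)^[i] (∅ : Set (Lit α))) :=
  (T_mono_aux Q).monotone_iterate_of_le_map (Set.empty_subset _)

theorem Cn_eq_aux {α : Type} (Q : Program α) :
    Cn Q = ⋃ i : ℕ, (T Q)^[i] (∅ : Set (Lit α)) := by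
  have hm := T_iter_mono_aux Q
  apply Set.Subset.antisymm
  · apply Set.sInter_subset_of_mem
    refine ⟨?_, ?_⟩
    · by_cases hc : Consistent (⋃ i : ℕ, (T Q)^[i] (∅ : Set (Lit α)))
      · exact Or.inl hc
      · right
        unfold Consistent at hc
        push Not at hc
        obtain ⟨A, h1, h2⟩ := hc
        obtain ⟨i, hi⟩ := Set.mem_iUnion.1 h1
        obtain ⟨j, hj⟩ := Set.mem_iUnion.1 h2
        have hn : ¬ Consistent ((T Q)^[max i j] (∅ : Set (Lit α))) := fun h =>
          h ⟨A, hm (le_max_left i j) hi, hm (le_max_right i j) hj⟩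
        apply Set.eq_univ_of_forall
        intro L
        refine Set.mem_iUnion.2 ⟨max i j + 1, ?_⟩
        rw [Function.iterate_succ_apply', T, if_neg hn]
        trivial
    · intro r hr hb
      obtain ⟨i, hi⟩ : ∃ i : ℕ, (↑r.pbody : Set (Lit α)) ⊆ (T Q)^[i] ∅ :=
        hm.directed_le.exists_mem_subset_of_finset_subset_biUnion hb
      refine Set.mem_iUnion.2 ⟨i + 1, ?_⟩
      rw [Function.iterate_succ_apply', T]
      split_ifs
      · exact ⟨r, hr, hi, rfl⟩
      · trivial
  · apply Set.subset_sInter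
    rintro Y ⟨hl, hcl⟩
    apply Set.iUnion_subset
    intro i
    induction i with
    | zero => exact Set.empty_subset _
    | succ i ih =>
      rw [Function.iterate_succ_apply', T]
      split_ifs with hc
      · rintro L ⟨r, hr, hb, rfl⟩
        exact hcl r hr (hb.trans ih)
      · rcases hl with hl | hl
        · exact absurd (fun ⟨A, h1, h2⟩ => hl ⟨A, ih h1, ih h2⟩) hc
        · rw [hl]

/-- any answer set `X` of `Π` equals `⋃ i, T_{Π^X}^i(∅)`. -/
theorem answerSet_eq_iUnion_iterate_T_reduct {α : Type} (P : Program α)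
    (hfin : P.Finite) (X : Set (Lit α)) (hX : AnswerSet P X) :
    X = ⋃ i : ℕ, (T (reduct P X))^[i] ∅ := by
  exact hX.symm.trans (Cn_eq_aux (reduct P X))
end

section
/- For any ordered logic program (Π,<), the operator C_{(Π,<)} is anti-monotonic: for all sets of literals X₁, X₂, if X₁ ⊆ X₂ then C_{(Π,<)}(X₂) ⊆ C_{(Π,<)}(X₁). -/
open scoped Classical

/-- `TP` is monotone in its argument and antitone in the context. -/
theorem TP_mono_anti {α : Type} (P : Program α) (lt : Rule α → Rule α → Prop)
    {Y Y' X X' : Set (Lit α)} (hY : Y' ⊆ Y) (hX : X ⊆ X') :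
    TP P lt Y X ⊆ TP P lt Y' X' := by
  have anti : ∀ (S A B : Set (Lit α)), A ⊆ B → S ∩ B = ∅ → S ∩ A = ∅ := fun S A B hAB hB =>
    Set.subset_empty_iff.mp (hB ▸ Set.inter_subset_inter_right S hAB)
  by_cases hc' : Consistent X'
  · have hc : Consistent X := fun ⟨A, h1, h2⟩ => hc' ⟨A, hX h1, hX h2⟩
    unfold TP
    rw [if_pos hc, if_pos hc']
    rintro L ⟨r, hr, ⟨hp, hn⟩, hno, rfl⟩
    refine ⟨r, hr, ⟨hp.trans hX, anti _ _ _ hY hn⟩, ?_, rfl⟩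
    rintro ⟨r', hr', hlt, ⟨hp', hn'⟩, hh⟩
    exact hno ⟨r', hr', hlt, ⟨hp'.trans hY, anti _ _ _ hX hn'⟩, fun h => hh (hX h)⟩
  · unfold TP
    rw [if_neg hc']
    exact Set.subset_univ _

/-- `C_{(Π,<)}` is anti-monotonic. -/
theorem CP_antimono {α : Type} (P : Program α) (hfin : P.Finite)
    (lt : Rule α → Rule α → Prop)
    (hirr : ∀ r, ¬ lt r r) (htrans : ∀ r₁ r₂ r₃, lt r₁ r₂ → lt r₂ r₃ → lt r₁ r₃)
    (X₁ X₂ : Set (Lit α)) (h : X₁ ⊆ X₂) :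
    CP P lt X₂ ⊆ CP P lt X₁ := by
  refine Set.iUnion_mono fun i => ?_
  induction i with
  | zero => exact subset_rfl
  | succ n ih =>
    rw [Function.iterate_succ_apply', Function.iterate_succ_apply']
    exact TP_mono_anti P lt h ih
end

section
/- For any ordered logic program (Π,<), if the least fixpoint X of A_{(Π,<)} is itself a fixpoint of C_{(Π,<)} (i.e., the corresponding well-founded model is two-valued), then X is the unique preferred answer set of (Π,<): C_{(Π,<)}(X)=X and every set Z with C_{(Π,<)}(Z)=Z equals X. -/
open scoped Classical

theorem TP_subset_aux {α : Type} (P : Program α) (lt : Rule α → Rule α → Prop)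
    {Y Y' X X' : Set (Lit α)} (hY : Y ⊆ Y') (hX : X ⊆ X') :
    TP P lt Y' X ⊆ TP P lt Y X' := by
  intro L hL
  by_cases h' : Consistent X'
  · have h : Consistent X := fun ⟨A, h1, h2⟩ => h' ⟨A, hX h1, hX h2⟩
    simp only [TP, if_pos h, if_pos h'] at hL ⊢
    obtain ⟨r, hr, ⟨hp, hn⟩, hpref, rfl⟩ := hL
    refine ⟨r, hr, ⟨hp.trans hX, ?_⟩, ?_, rfl⟩
    · exact Set.subset_eq_empty (Set.inter_subset_inter_right _ hY) hn
    · rintro ⟨r', hr', hlt, ⟨hp', hn'⟩, hh⟩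
      exact hpref ⟨r', hr', hlt, ⟨hp'.trans hY,
        Set.subset_eq_empty (Set.inter_subset_inter_right _ hX) hn'⟩, fun h => hh (hX h)⟩
  · simp [TP, if_neg h']

theorem CP_antitone_aux {α : Type} (P : Program α) (lt : Rule α → Rule α → Prop)
    {Y Y' : Set (Lit α)} (hY : Y ⊆ Y') : CP P lt Y' ⊆ CP P lt Y := by
  refine Set.iUnion_mono fun i => ?_
  induction i with
  | zero => exact subset_rfl
  | succ n ih =>
    rw [Function.iterate_succ_apply', Function.iterate_succ_apply']
    exact TP_subset_aux P lt hY ih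

/-- if the least fixpoint `X` of `A_{(Π,<)}` is itself a fixpoint
of `C_{(Π,<)}`, then `X` is the unique preferred answer set. -/
theorem twoValued_wfm_unique_preferredAnswerSet {α : Type} (P : Program α)
    (hfin : P.Finite) (lt : Rule α → Rule α → Prop)
    (hirr : ∀ r, ¬ lt r r) (htrans : ∀ r₁ r₂ r₃, lt r₁ r₂ → lt r₂ r₃ → lt r₁ r₃)
    (X : Set (Lit α))
    (hlfp : AP P lt X = X ∧ ∀ W, AP P lt W = W → X ⊆ W)
    (hfix : CP P lt X = X) :
    CP P lt X = X ∧ ∀ Z : Set (Lit α), CP P lt Z = Z → Z = X := by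
  refine ⟨hfix, fun Z hZ => ?_⟩
  have hXZ : X ⊆ Z := hlfp.2 Z (by simp only [AP, hZ])
  refine Set.Subset.antisymm ?_ hXZ
  have h := CP_antitone_aux P lt hXZ
  rwa [hZ, hfix] at h
end

section
/- For any ordered logic program (Π,<) and any set X of literals, C_Π(X) ⊆ C°_{(Π,<)}(X): the preference-based consequence operator derives at least the consequences of the standard operator. -/
open scoped Classical

theorem TN_mono_aux {α : Type} (P : Program α) (lt : Rule α → Rule α → Prop)
    (Y : Set (Lit α)) : Monotone (TN P lt Y) := by
  intro X X' h
  unfold TN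
  by_cases h' : Consistent X'
  · have hX : Consistent X := fun ⟨A, h1, h2⟩ => h' ⟨A, h h1, h h2⟩
    rw [if_pos h', if_pos hX]
    rintro L ⟨r, hr, ⟨h1, h2⟩, rfl⟩
    refine ⟨r, hr, ⟨h1.trans h, ?_⟩, rfl⟩
    rw [Set.eq_empty_iff_forall_notMem] at h2 ⊢
    rintro M ⟨hM, hY, hD⟩
    refine h2 M ⟨hM, hY, fun hD' => hD ?_⟩
    intro r' hr' e hp
    obtain ⟨a, b⟩ := hD' r' hr' e hp
    refine ⟨a, ?_⟩
    rw [← Set.nonempty_iff_ne_empty] at b ⊢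
    exact b.mono (Set.inter_subset_inter_left _ (Set.union_subset_union_right _ h))
  · rw [if_neg h']
    exact Set.subset_univ _

theorem TN_iter_mono_aux {α : Type} (P : Program α) (lt : Rule α → Rule α → Prop)
    (Y : Set (Lit α)) : Monotone (fun i : ℕ => (TN P lt Y)^[i] ∅) :=
  (TN_mono_aux P lt Y).monotone_iterate_of_le_map (Set.empty_subset _)

/-- `C_Π(X) ⊆ C°_{(Π,<)}(X)`. -/
theorem Cop_subset_CN {α : Type} (P : Program α) (hfin : P.Finite)
    (lt : Rule α → Rule α → Prop)
    (hirr : ∀ r, ¬ lt r r) (htrans : ∀ r₁ r₂ r₃, lt r₁ r₂ → lt r₂ r₃ → lt r₁ r₃)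
    (X : Set (Lit α)) :
    Cop P X ⊆ CN P lt X := by
  have hm := TN_iter_mono_aux P lt X
  have hstep : ∀ i, TN P lt X ((TN P lt X)^[i] ∅) ⊆ CN P lt X := by
    intro i L hL
    refine Set.mem_iUnion.2 ⟨i + 1, ?_⟩
    rw [Function.iterate_succ_apply']
    exact hL
  have huniv : ∀ i, ¬ Consistent ((TN P lt X)^[i] ∅) → CN P lt X = Set.univ := by
    intro i hi
    have := hstep i
    rw [TN, if_neg hi] at this
    exact Set.univ_subset_iff.1 this
  refine Set.sInter_subset_of_mem ⟨?_, ?_⟩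
  · by_cases hc : Consistent (CN P lt X)
    · exact Or.inl hc
    · right
      obtain ⟨A, h1, h2⟩ := not_not.1 hc
      obtain ⟨i, hi⟩ := Set.mem_iUnion.1 h1
      obtain ⟨j, hj⟩ := Set.mem_iUnion.1 h2
      exact huniv (max i j) (not_not.2
        ⟨A, hm (le_max_left i j) hi, hm (le_max_right i j) hj⟩)
  · rintro s ⟨r, hr, hn, rfl⟩ hp
    have hp' : (↑r.pbody : Set (Lit α)) ⊆ ⋃ i : ℕ, (TN P lt X)^[i] ∅ := hp
    obtain ⟨i, hi⟩ := hm.directed_le.exists_mem_subset_of_finset_subset_biUnion hp'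
    by_cases hc : Consistent ((TN P lt X)^[i] ∅)
    · apply hstep i
      rw [TN, if_pos hc]
      refine ⟨r, hr, ⟨hi, ?_⟩, rfl⟩
      exact Set.subset_empty_iff.1
        ((Set.inter_subset_inter_right _ Set.diff_subset).trans hn.subset)
    · rw [huniv i hc]
      exact Set.mem_univ _
end

section
/- Every ordered logic program (Π,<) has a unique preferred well-founded set: there exists exactly one set X of literals such that A°_{(Π,<)}(X)=X and X ⊆ Z for every set Z with A°_{(Π,<)}(Z)=Z; consequently every ordered logic program has a unique preferred well-founded model. -/
open scoped Classical

theorem aux_Cop_anti {α : Type} (P : Program α) {X X' : Set (Lit α)} (h : X ⊆ X') :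
    Cop P X' ⊆ Cop P X := by
  intro L hL S hS
  refine hL S ⟨hS.1, ?_⟩
  rintro s ⟨r, hr, hn, rfl⟩ hp
  refine hS.2 ⟨r.head, r.pbody, ∅⟩ ⟨r, hr, ?_, rfl⟩ hp
  exact Set.subset_eq_empty (Set.inter_subset_inter_right _ h) hn

theorem aux_D_mono {α : Type} (P : Program α) (lt : Rule α → Rule α → Prop) (r : Rule α)
    {X X' Y Y' : Set (Lit α)} (hX : X ⊆ X') (hY : Y ⊆ Y') :
    D P lt r X Y' ⊆ D P lt r X' Y := by
  intro L hL r' hr' hh hp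
  obtain ⟨h1, h2⟩ := hL r' hr' hh (hp.trans hY)
  refine ⟨h1, fun h => h2 ?_⟩
  exact Set.subset_eq_empty
    (Set.inter_subset_inter_left _ (Set.union_subset_union_right _ hX)) h

theorem aux_TN_mono {α : Type} (P : Program α) (lt : Rule α → Rule α → Prop)
    {X X' Y Y' : Set (Lit α)} (hX : X ⊆ X') (hY : Y ⊆ Y') :
    TN P lt Y' X ⊆ TN P lt Y X' := by
  unfold TN
  by_cases hc' : Consistent X'
  · have hc : Consistent X := fun ⟨A, h1, h2⟩ => hc' ⟨A, hX h1, hX h2⟩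
    rw [if_pos hc, if_pos hc']
    rintro L ⟨r, hr, ⟨hp, hn⟩, rfl⟩
    refine ⟨r, hr, ⟨hp.trans hX, ?_⟩, rfl⟩
    refine Set.subset_eq_empty (Set.inter_subset_inter_right _ ?_) hn
    intro M hM
    exact ⟨hY hM.1, fun h => hM.2 (aux_D_mono P lt r hX hY h)⟩
  · rw [if_neg hc']
    exact Set.subset_univ _

theorem aux_CN_anti {α : Type} (P : Program α) (lt : Rule α → Rule α → Prop)
    {Y Y' : Set (Lit α)} (hY : Y ⊆ Y') : CN P lt Y' ⊆ CN P lt Y := by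
  refine Set.iUnion_mono fun i => ?_
  induction i with
  | zero => exact subset_rfl
  | succ n ih =>
    rw [Function.iterate_succ_apply', Function.iterate_succ_apply']
    exact aux_TN_mono P lt ih hY

theorem aux_AN_mono {α : Type} (P : Program α) (lt : Rule α → Rule α → Prop) :
    Monotone (AN P lt) := fun _ _ h => aux_CN_anti P lt (aux_Cop_anti P h)

/-- Theorem 2 and Corollary 1: every ordered logic program has a
unique preferred well-founded set (the least fixpoint of `A°_{(Π,<)}`), and
consequently a unique preferred well-founded model. -/
theorem unique_preferred_wf_set_and_model {α : Type} (P : Program α)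
    (hfin : P.Finite) (lt : Rule α → Rule α → Prop)
    (hirr : ∀ r, ¬ lt r r) (htrans : ∀ r₁ r₂ r₃, lt r₁ r₂ → lt r₂ r₃ → lt r₁ r₃) :
    (∃! X : Set (Lit α), AN P lt X = X ∧ ∀ Z, AN P lt Z = Z → X ⊆ Z) ∧
    (∃! M : Set (Lit α) × Set (Lit α), ∃ X : Set (Lit α),
      (AN P lt X = X ∧ ∀ Z, AN P lt Z = Z → X ⊆ Z) ∧
      M = (X, Set.univ \ Cop P X)) := by
  have h1 : ∃! X : Set (Lit α), AN P lt X = X ∧ ∀ Z, AN P lt Z = Z → X ⊆ Z := by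
    let f : Set (Lit α) →o Set (Lit α) := ⟨AN P lt, aux_AN_mono P lt⟩
    refine ⟨OrderHom.lfp f, ⟨OrderHom.map_lfp f, fun Z hZ => OrderHom.lfp_le f hZ.le⟩, ?_⟩
    rintro X ⟨hX, hl⟩
    exact Set.Subset.antisymm (hl _ (OrderHom.map_lfp f)) (OrderHom.lfp_le f hX.le)
  refine ⟨h1, ?_⟩
  obtain ⟨X, hX, hu⟩ := h1
  refine ⟨(X, Set.univ \ Cop P X), ⟨X, hX, rfl⟩, ?_⟩
  rintro M ⟨X', hX', rfl⟩
  rw [hu X' hX']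
end
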